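/- Let B > 0. For every α > 0 there exists β > 0 such that for every complex-valued Schwartz function f on ℝ one has ‖x f‖ ≤ α‖−f'' + B²x²f‖ + β‖f‖, where x f denotes the function x ↦ x·f(x), x²f denotes x ↦ x²f(x), and f'' is the second derivative of f. -/

import Mathlib

open MeasureTheory

/-!
Integration by parts turns `⟪f, (-Δ + V) f⟫` into `‖∇f‖² + ∫ V |f|²`. If `w² ≤ V`, discarding the
gradient and applying Cauchy–Schwarz gives `‖w f‖² ≤ ‖f‖ ‖(-Δ + V) f‖`, and the AM–GM inequality
splits this product with an arbitrarily small weight on `‖(-Δ + V) f‖`. The harmonic oscillator is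
the case `V = B²x²`, `w = Bx`.
-/

open scoped Laplacian LineDeriv RealInnerProductSpace SchwartzMap

lemma le_mul_add_inv_mul_of_sq_le_mul {a b c ε : ℝ} (ha : 0 ≤ a) (hb : 0 ≤ b) (hε : 0 < ε)
    (h : c ^ 2 ≤ a * b) : c ≤ ε * b + (4 * ε)⁻¹ * a := by
  refine le_of_sq_le_sq ?_ (by positivity)
  calc c ^ 2 ≤ a * b := h
    _ ≤ a * b + (ε * b - (4 * ε)⁻¹ * a) ^ 2 := le_add_of_nonneg_right (sq_nonneg _)
    _ = (ε * b + (4 * ε)⁻¹ * a) ^ 2 := by field_simp; ring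

section L2Norm

variable {X F : Type*} [MeasurableSpace X] {μ : Measure X} [NormedAddCommGroup F]

lemma sq_toReal_eLpNorm_two {f : X → F} (hf : AEStronglyMeasurable f μ) :
    (eLpNorm f 2 μ).toReal ^ 2 = ∫ x, ‖f x‖ ^ 2 ∂μ := by
  have h_nonneg : 0 ≤ ∫ x, ‖f x‖ ^ 2 ∂μ := integral_nonneg fun x ↦ by positivity
  rw [toReal_eLpNorm hf, lpNorm_eq_integral_norm_rpow_toReal two_ne_zero ENNReal.ofNat_ne_top hf]
  simp only [ENNReal.toReal_ofNat, Real.rpow_ofNat]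
  exact Real.rpow_inv_natCast_pow h_nonneg two_ne_zero

lemma integral_inner_le_toReal_eLpNorm_two_mul [InnerProductSpace ℝ F] {f g : X → F}
    (hf : MemLp f 2 μ) (hg : MemLp g 2 μ) :
    ∫ x, ⟪f x, g x⟫ ∂μ ≤ (eLpNorm f 2 μ).toReal * (eLpNorm g 2 μ).toReal := by
  calc ∫ x, ⟪f x, g x⟫ ∂μ = ⟪hf.toLp f, hg.toLp g⟫ := by
        rw [L2.inner_def]
        refine integral_congr_ae ?_
        filter_upwards [hf.coeFn_toLp, hg.coeFn_toLp] with x hfx hgx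
        rw [hfx, hgx]
    _ ≤ ‖hf.toLp f‖ * ‖hg.toLp g‖ := real_inner_le_norm _ _
    _ = (eLpNorm f 2 μ).toReal * (eLpNorm g 2 μ).toReal := by
        rw [Lp.norm_toLp, Lp.norm_toLp]

end L2Norm

section SchwartzIntegrability

variable {D F : Type*} [NormedAddCommGroup D] [NormedSpace ℝ D] [MeasurableSpace D]
  [BorelSpace D] [SecondCountableTopology D] {μ : Measure D} [μ.HasTemperateGrowth]
  [NormedAddCommGroup F] [InnerProductSpace ℝ F]

lemma integrable_inner_schwartzMap (f g : 𝓢(D, F)) : Integrable (fun x ↦ ⟪f x, g x⟫) μ :=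
  (SchwartzMap.pairing (innerSL ℝ) f g).integrable

lemma integrable_mul_norm_sq_schwartzMap {V : D → ℝ} (hV : V.HasTemperateGrowth)
    (f : 𝓢(D, F)) : Integrable (fun x ↦ V x * ‖f x‖ ^ 2) μ := by
  simpa only [SchwartzMap.smulLeftCLM_apply_apply hV, real_inner_smul_right,
    real_inner_self_eq_norm_sq] using
    integrable_inner_schwartzMap f (SchwartzMap.smulLeftCLM F V f)

end SchwartzIntegrability

section Schrodinger

variable {E F : Type*} [NormedAddCommGroup E] [InnerProductSpace ℝ E] [FiniteDimensional ℝ E]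
  [NormedAddCommGroup F] [InnerProductSpace ℝ F] {V : E → ℝ}

/-- The Schrödinger operator `-Δ + V` on Schwartz functions. As `SchwartzMap.smulLeftCLM` is zero
for a multiplier without temperate growth, it is meaningful only when `V` has temperate growth. -/
noncomputable def schrodingerOp (V : E → ℝ) (f : 𝓢(E, F)) : 𝓢(E, F) :=
  -Δ f + SchwartzMap.smulLeftCLM F V f

lemma schrodingerOp_apply (hV : V.HasTemperateGrowth) (f : 𝓢(E, F)) (x : E) :
    schrodingerOp V f x = -Δ f x + V x • f x := by
  rw [← SchwartzMap.smulLeftCLM_apply_apply hV]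
  rfl

variable [MeasurableSpace E] [BorelSpace E] {μ : Measure E} [μ.IsAddHaarMeasure]

lemma integral_inner_laplacian_self_eq_neg_sum {ι : Type*} [Fintype ι]
    (b : OrthonormalBasis ι ℝ E) (f : 𝓢(E, F)) :
    ∫ x, ⟪f x, Δ f x⟫ ∂μ = -∑ i, ∫ x, ‖∂_{b i} f x‖ ^ 2 ∂μ := by
  have integral_by_parts (i : ι) :
      ∫ x, ⟪f x, ∂_{b i} (∂_{b i} f) x⟫ ∂μ = -∫ x, ‖∂_{b i} f x‖ ^ 2 ∂μ := by
    simp_rw [← real_inner_self_eq_norm_sq]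
    exact SchwartzMap.integral_bilinear_lineDerivOp_right_eq_neg_left f (∂_{b i} f) (innerSL ℝ) _
  simp_rw [SchwartzMap.laplacian_eq_sum b, sum_apply, inner_sum]
  rw [integral_finsetSum _ fun i _ ↦ integrable_inner_schwartzMap f _]
  simp only [integral_by_parts, Finset.sum_neg_distrib]

lemma integral_inner_laplacian_self_nonpos (f : 𝓢(E, F)) : ∫ x, ⟪f x, Δ f x⟫ ∂μ ≤ 0 := by
  rw [integral_inner_laplacian_self_eq_neg_sum (stdOrthonormalBasis ℝ E), neg_nonpos]
  exact Finset.sum_nonneg fun i _ ↦ integral_nonneg fun x ↦ by positivity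

lemma integral_mul_norm_sq_le_integral_inner_schrodingerOp (hV : V.HasTemperateGrowth)
    (f : 𝓢(E, F)) : ∫ x, V x * ‖f x‖ ^ 2 ∂μ ≤ ∫ x, ⟪f x, schrodingerOp V f x⟫ ∂μ := by
  have potential_eq (x : E) : V x * ‖f x‖ ^ 2 = ⟪f x, schrodingerOp V f x⟫ + ⟪f x, Δ f x⟫ := by
    rw [schrodingerOp_apply hV, inner_add_right, inner_neg_right, real_inner_smul_right,
      real_inner_self_eq_norm_sq]
    ring
  simp_rw [potential_eq]
  rw [integral_add (integrable_inner_schwartzMap _ _) (integrable_inner_schwartzMap _ _)]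
  exact add_le_of_nonpos_right (integral_inner_laplacian_self_nonpos f)

lemma sq_toReal_eLpNorm_smul_le_mul_schrodingerOp (hV : V.HasTemperateGrowth) {w : E → ℝ}
    (hw : AEStronglyMeasurable w μ) (hwV : ∀ x, w x ^ 2 ≤ V x) (f : 𝓢(E, F)) :
    (eLpNorm (fun x ↦ w x • f x) 2 μ).toReal ^ 2 ≤
      (eLpNorm f 2 μ).toReal * (eLpNorm (schrodingerOp V f) 2 μ).toReal := by
  calc (eLpNorm (fun x ↦ w x • f x) 2 μ).toReal ^ 2
      = ∫ x, w x ^ 2 * ‖f x‖ ^ 2 ∂μ := by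
        rw [sq_toReal_eLpNorm_two (hw.fun_smul f.continuous.aestronglyMeasurable)]
        simp_rw [norm_smul, mul_pow, Real.norm_eq_abs, sq_abs]
    _ ≤ ∫ x, V x * ‖f x‖ ^ 2 ∂μ :=
        integral_mono_of_nonneg (.of_forall fun x ↦ by positivity)
          (integrable_mul_norm_sq_schwartzMap hV f)
          (.of_forall fun x ↦ mul_le_mul_of_nonneg_right (hwV x) (by positivity))
    _ ≤ ∫ x, ⟪f x, schrodingerOp V f x⟫ ∂μ :=
        integral_mul_norm_sq_le_integral_inner_schrodingerOp hV f
    _ ≤ (eLpNorm f 2 μ).toReal * (eLpNorm (schrodingerOp V f) 2 μ).toReal :=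
        integral_inner_le_toReal_eLpNorm_two_mul (f.memLp 2 μ) ((schrodingerOp V f).memLp 2 μ)

theorem stmt_3_general (hV : V.HasTemperateGrowth) {w : E → ℝ} (hw : AEStronglyMeasurable w μ)
    {B α : ℝ} (hB : 0 < B) (hα : 0 < α) (hwV : ∀ x, (B * w x) ^ 2 ≤ V x) (f : 𝓢(E, F)) :
    (eLpNorm (fun x ↦ w x • f x) 2 μ).toReal ≤
      α * (eLpNorm (fun x ↦ -Δ f x + V x • f x) 2 μ).toReal +
        (4 * α * B ^ 2)⁻¹ * (eLpNorm f 2 μ).toReal := by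
  have h_scale : (eLpNorm (fun x ↦ (B * w x) • f x) 2 μ).toReal =
      B * (eLpNorm (fun x ↦ w x • f x) 2 μ).toReal := by
    simp_rw [mul_smul]
    rw [← Pi.smul_def B, eLpNorm_const_smul, ENNReal.toReal_mul, toReal_enorm,
      Real.norm_of_nonneg hB.le]
  have h_scaled_bound := le_mul_add_inv_mul_of_sq_le_mul ENNReal.toReal_nonneg
    ENNReal.toReal_nonneg (mul_pos hα hB)
    (sq_toReal_eLpNorm_smul_le_mul_schrodingerOp hV (hw.const_mul B) hwV f)
  simp_rw [← schrodingerOp_apply hV]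
  rw [h_scale] at h_scaled_bound
  refine le_of_mul_le_mul_left (h_scaled_bound.trans_eq ?_) hB
  field_simp

end Schrodinger

/-- Let B > 0. For every α > 0 there exists β > 0 such that for every
complex-valued Schwartz function f on ℝ one has
‖x f‖ ≤ α‖−f'' + B²x²f‖ + β‖f‖. -/
theorem stmt_3 (B : ℝ) (hB : 0 < B) (α : ℝ) (hα : 0 < α) :
    ∃ β : ℝ, 0 < β ∧
      ∀ f : SchwartzMap ℝ ℂ,
        (eLpNorm (fun x : ℝ => (x : ℂ) * f x) 2 volume).toReal ≤
          α * (eLpNorm (fun x : ℝ =>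
              -(deriv (deriv f) x) + ((B ^ 2 * x ^ 2 : ℝ) : ℂ) * f x) 2 volume).toReal +
            β * (eLpNorm (fun x : ℝ => f x) 2 volume).toReal := by
  refine ⟨(4 * α * B ^ 2)⁻¹, by positivity, fun f ↦ ?_⟩
  simpa only [SchwartzMap.laplacian_apply, InnerProductSpace.laplacian_eq_iteratedDeriv_real,
    iteratedDeriv_succ, iteratedDeriv_zero, Complex.real_smul] using
    stmt_3_general (V := fun x ↦ B ^ 2 * x ^ 2) (w := fun x ↦ x) (by fun_prop)
      aestronglyMeasurable_id hB hα (fun x ↦ (mul_pow B x 2).le) f
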